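/- Let K be a field, v ∈ ℤ^n, and let K ∈ K[x]^{n×n} have no zero row, so that d = rdeg_v(K) ∈ ℤ^n. (a) If lm_v(K) has no zero column, then lm_{−d}(K^T) = (lm_v(K))^T and rdeg_{−d}(K^T) = −v. (b) If K is in v-reduced form, then K^T is in −d-reduced form. -/

import Mathlib

open Polynomial Matrix

/-- The degree of a polynomial, viewed in `ℤ ∪ {-∞}`. -/
noncomputable def degZ {K : Type*} [Field K] (p : K[X]) : WithBot ℤ :=
  p.degree.map fun a : ℕ => (a : ℤ)

/-- The `s`-row degree of a (row) vector of polynomials. -/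
noncomputable def rdegRow {K : Type*} [Field K] {ν : Type*} [Fintype ν]
    (s : ν → ℤ) (v : ν → K[X]) : WithBot ℤ :=
  Finset.univ.sup fun j => degZ (v j) + (s j : WithBot ℤ)

/-- The `s`-row degree of a polynomial matrix. -/
noncomputable def rdeg {K : Type*} [Field K] {ι ν : Type*} [Fintype ν]
    (s : ν → ℤ) (P : Matrix ι ν K[X]) : ι → WithBot ℤ :=
  fun i => rdegRow s (P i)

/-- The `t`-column degree of a polynomial matrix. -/
noncomputable def cdeg {K : Type*} [Field K] {ι ν : Type*} [Fintype ι]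
    (t : ι → ℤ) (P : Matrix ι ν K[X]) : ν → WithBot ℤ :=
  fun j => Finset.univ.sup fun i => degZ (P i j) + (t i : WithBot ℤ)

/-- Coefficient of integer degree `d` of a polynomial (0 if `d < 0`). -/
noncomputable def coeffZ {K : Type*} [Field K] (p : K[X]) (d : ℤ) : K :=
  if 0 ≤ d then p.coeff d.toNat else 0

/-- The `s`-leading matrix of a polynomial matrix. -/
noncomputable def lm {K : Type*} [Field K] {ι ν : Type*} [Fintype ν]
    (s : ν → ℤ) (P : Matrix ι ν K[X]) : Matrix ι ν K :=
  Matrix.of fun i j =>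
    (rdeg s P i).recBotCoe 0 fun t => coeffZ (P i j) (t - s j)

/-- `P` is in `s`-reduced form: its `s`-leading matrix has full row rank,
i.e. its rows are linearly independent over `K`. -/
def IsReducedForm {K : Type*} [Field K] {ι ν : Type*} [Fintype ν]
    (s : ν → ℤ) (P : Matrix ι ν K[X]) : Prop :=
  LinearIndependent K fun i => lm s P i

open Classical in
/-- The `s`-pivot index of a row vector: the largest column index where the
`s`-row degree is attained (with a nonzero entry); `⊥` for the zero row. -/
noncomputable def piv {K : Type*} [Field K] {ν : Type*} [Fintype ν] [LinearOrder ν]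
    (s : ν → ℤ) (v : ν → K[X]) : WithBot ν :=
  (Finset.univ.filter fun j => v j ≠ 0 ∧ degZ (v j) + (s j : WithBot ℤ) = rdegRow s v).max

/-- The `s`-pivot degree of a row vector (junk value `0` for the zero row). -/
noncomputable def pivDeg {K : Type*} [Field K] {ν : Type*} [Fintype ν] [LinearOrder ν]
    (s : ν → ℤ) (v : ν → K[X]) : ℕ :=
  ((piv s v).map fun j => (v j).natDegree).unbotD 0

/-- `P` is in `s`-weak Popov form: no zero row and strictly increasing `s`-pivot indices. -/
def IsWeakPopov {K : Type*} [Field K] {ι ν : Type*} [Fintype ν] [LinearOrder ν] [Preorder ι]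
    (s : ν → ℤ) (P : Matrix ι ν K[X]) : Prop :=
  (∀ i, piv s (P i) ≠ ⊥) ∧ StrictMono fun i => piv s (P i)

/-- `P` is in `s`-unordered weak Popov form: no zero row and pairwise distinct
`s`-pivot indices. -/
def IsUWeakPopov {K : Type*} [Field K] {ι ν : Type*} [Fintype ν] [LinearOrder ν]
    (s : ν → ℤ) (P : Matrix ι ν K[X]) : Prop :=
  (∀ i, piv s (P i) ≠ ⊥) ∧ Function.Injective fun i => piv s (P i)

/-- `P` is in `s`-Popov form: `s`-weak Popov, monic pivots, and each pivot entry
has degree strictly larger than the other entries of its column. -/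
def IsPopov {K : Type*} [Field K] {ι ν : Type*} [Fintype ν] [LinearOrder ν] [Preorder ι]
    (s : ν → ℤ) (P : Matrix ι ν K[X]) : Prop :=
  IsWeakPopov s P ∧
    ∀ i (j : ν), piv s (P i) = (j : WithBot ν) →
      (P i j).Monic ∧ ∀ i', i' ≠ i → (P i' j).degree < (P i j).degree

/-- The row space of a polynomial matrix. -/
noncomputable def rowSpace {K : Type*} [Field K] {ι ν : Type*} (P : Matrix ι ν K[X]) :
    Submodule K[X] (ν → K[X]) :=
  Submodule.span K[X] (Set.range fun i => P i)

/-- The rows of `B` form a basis of the module `M`. -/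
def IsBasisOf {K : Type*} [Field K] {ι ν : Type*} (B : Matrix ι ν K[X])
    (M : Submodule K[X] (ν → K[X])) : Prop :=
  LinearIndependent K[X] (fun i => B i) ∧
    Submodule.span K[X] (Set.range fun i => B i) = M

/-- The left kernel of a polynomial matrix. -/
noncomputable def leftKernel {K : Type*} [Field K] {ι ν : Type*} [Fintype ι]
    (F : Matrix ι ν K[X]) : Submodule K[X] (ι → K[X]) :=
  LinearMap.ker F.vecMulLinear

theorem degZ_zero_aux {K : Type*} [Field K] : degZ (0 : K[X]) = ⊥ := by
  simp [degZ]

theorem degZ_ne_aux {K : Type*} [Field K] {p : K[X]} (hp : p ≠ 0) :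
    degZ p = ((p.natDegree : ℤ) : WithBot ℤ) := by
  simp only [degZ, Polynomial.degree_eq_natDegree hp]
  rfl

theorem lm_apply_aux {K : Type*} [Field K] {ι ν : Type*} [Fintype ν]
    (s : ν → ℤ) (P : Matrix ι ν K[X]) (i : ι) (j : ν) (t : ℤ)
    (h : rdeg s P i = ((t : ℤ) : WithBot ℤ)) :
    lm s P i j = coeffZ (P i j) (t - s j) := by
  simp only [lm, Matrix.of_apply, h]
  rfl

theorem coeffZ_ne_aux {K : Type*} [Field K] {p : K[X]} {k : ℤ} (h : coeffZ p k ≠ 0) :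
    p ≠ 0 ∧ k ≤ p.natDegree := by
  unfold coeffZ at h
  split_ifs at h with hk
  · refine ⟨fun h0 => h (by simp [h0]), ?_⟩
    have := Polynomial.le_natDegree_of_ne_zero h
    omega
  · exact absurd rfl h

theorem part_a_aux {K : Type*} [Field K] {n : ℕ}
    (v : Fin n → ℤ) (M : Matrix (Fin n) (Fin n) K[X])
    (d : Fin n → ℤ) (hd : ∀ i, rdeg v M i = ((d i : ℤ) : WithBot ℤ))
    (hc : ∀ j, ∃ i, lm v M i j ≠ 0) :
    lm (fun i => -d i) Mᵀ = (lm v M)ᵀ ∧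
        ∀ i, rdeg (fun i' => -d i') Mᵀ i = ((-v i : ℤ) : WithBot ℤ) := by
  have hr : ∀ i, rdeg (fun i' => -d i') Mᵀ i = ((-v i : ℤ) : WithBot ℤ) := by
    intro j
    apply le_antisymm
    · unfold rdeg rdegRow
      refine Finset.sup_le fun i _ => ?_
      rw [Matrix.transpose_apply]
      by_cases h0 : M i j = 0
      · simp [h0, degZ_zero_aux]
      · have h1 : degZ (M i j) + (v j : WithBot ℤ) ≤ rdeg v M i :=
          Finset.le_sup (f := fun j => degZ (M i j) + (v j : WithBot ℤ)) (Finset.mem_univ j)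
        rw [hd, degZ_ne_aux h0, ← WithBot.coe_add, WithBot.coe_le_coe] at h1
        rw [degZ_ne_aux h0, ← WithBot.coe_add, WithBot.coe_le_coe]
        beta_reduce
        omega
    · obtain ⟨i, hi⟩ := hc j
      rw [lm_apply_aux v M i j _ (hd i)] at hi
      obtain ⟨h0, hk⟩ := coeffZ_ne_aux hi
      have h1 : degZ (M i j) + ((-d i : ℤ) : WithBot ℤ) ≤ rdeg (fun i' => -d i') Mᵀ j :=
        Finset.le_sup (f := fun i => degZ (M i j) + ((-d i : ℤ) : WithBot ℤ)) (Finset.mem_univ i)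
      refine le_trans ?_ h1
      rw [degZ_ne_aux h0, ← WithBot.coe_add, WithBot.coe_le_coe]
      omega
  refine ⟨?_, hr⟩
  ext j i
  rw [Matrix.transpose_apply, lm_apply_aux _ _ _ _ _ (hr j), lm_apply_aux _ _ _ _ _ (hd i),
    Matrix.transpose_apply]
  congr 1
  ring

/-- Lemma 3.2 (a),(b): for `M` with no zero row and
`d = rdeg_v(M) ∈ ℤ^n`: (a) if `lm_v(M)` has no zero column then
`lm_{−d}(Mᵀ) = (lm_v(M))ᵀ` and `rdeg_{−d}(Mᵀ) = −v`; (b) if `M` is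
`v`-reduced then `Mᵀ` is `(−d)`-reduced. -/
theorem transpose_reduced {K : Type*} [Field K] {n : ℕ}
    (v : Fin n → ℤ) (M : Matrix (Fin n) (Fin n) K[X])
    (hnz : ∀ i, ∃ j, M i j ≠ 0)
    (d : Fin n → ℤ) (hd : ∀ i, rdeg v M i = ((d i : ℤ) : WithBot ℤ)) :
    ((∀ j, ∃ i, lm v M i j ≠ 0) →
      lm (fun i => -d i) Mᵀ = (lm v M)ᵀ ∧
        ∀ i, rdeg (fun i' => -d i') Mᵀ i = ((-v i : ℤ) : WithBot ℤ)) ∧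
    (IsReducedForm v M → IsReducedForm (fun i => -d i) Mᵀ) := by
  refine ⟨part_a_aux v M d hd, fun h => ?_⟩
  have hu : IsUnit (lm v M) := Matrix.linearIndependent_rows_iff_isUnit.mp h
  have hut : IsUnit (lm v M)ᵀ := (Matrix.isUnit_transpose _).mpr hu
  have hli := Matrix.linearIndependent_rows_iff_isUnit.mpr hut
  have hc : ∀ j, ∃ i, lm v M i j ≠ 0 := by
    intro j
    by_contra hcon
    push Not at hcon
    exact hli.ne_zero j (funext fun i => hcon i)
  have ha := (part_a_aux v M d hd hc).1
  unfold IsReducedForm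
  rw [ha]
  exact hli
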